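/- Let a ≥ 1 and 1 ≤ k ≤ a be integers. The number of quadratic polynomials g(x) = kx² + n₁x + n₂ with n₁, n₂ ∈ ℤ that interlace f_a (i.e., the two real roots of g lie in the closed intervals determined by consecutive roots of f_a, equivalently the point (−n₁/k, n₂/k appropriately normalized) lies in the dilated cyclic polytope) equals k²(a²+3a+9)/2 + 1 if k is even and k²(a²+3a+9)/2 − 1/2 if k is odd. -/

import Mathlib

/-!
The roots of `f_a` are permuted cyclically by `x ↦ -1 / (1 + x)`, so they are `ρ`, `-1 / (1 + ρ)`
and `-(1 + ρ) / ρ`, where `ρ > a + 1` is the largest one. As `f_a` is irreducible, already modulo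
`2`, no quadratic with integer coefficients vanishes at a root, and interlacing becomes the sign
pattern `+, -, +` at the three roots. In the barycentric coordinates
`(2k + n₂ - n₁, -n₂, k(a + 1) + n₁)` of sum `k(a + 3)` the symmetry of the roots is the cyclic shift
of coordinates, so the three sign conditions are the rotations of a single one. For `k ≤ a + 1` they
force the coordinates to be nonnegative, and each of them cuts one corner off the triangle of
nonnegative coordinates. The three corners are disjoint and congruent, and both the triangle and a
corner are counted by summing over columns.
-/

section SimplestCubic

open Polynomial

/-- Shanks' simplest cubic polynomial, written `f_a` in the paper. -/
noncomputable def simplestCubic {R : Type*} [CommRing R] (a : R) : R[X] :=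
  X ^ 3 - C a * X ^ 2 - C (a + 3) * X - 1

lemma isRoot_simplestCubic {R : Type*} [CommRing R] {a x : R} :
    (simplestCubic a).IsRoot x ↔ x ^ 3 - a * x ^ 2 - (a + 3) * x - 1 = 0 := by
  simp [simplestCubic]

lemma map_simplestCubic {R S : Type*} [CommRing R] [CommRing S] (φ : R →+* S) (a : R) :
    (simplestCubic a).map φ = simplestCubic (φ a) := by
  simp [simplestCubic, map_ofNat φ 3]

lemma natDegree_simplestCubic {R : Type*} [CommRing R] [Nontrivial R] (a : R) :
    (simplestCubic a).natDegree = 3 := by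
  unfold simplestCubic
  compute_degree!

lemma monic_simplestCubic {R : Type*} [CommRing R] (a : R) : (simplestCubic a).Monic := by
  unfold simplestCubic
  monicity!

lemma irreducible_simplestCubic_zmod_two (a : ZMod 2) : Irreducible (simplestCubic a) := by
  refine irreducible_of_degree_le_three_of_not_isRoot (by simp [natDegree_simplestCubic]) ?_
  simp only [isRoot_simplestCubic]
  revert a
  decide

lemma irreducible_simplestCubic (a : ℤ) : Irreducible (simplestCubic a) := by
  refine (monic_simplestCubic a).irreducible_of_irreducible_map (Int.castRingHom (ZMod 2)) _ ?_
  rw [map_simplestCubic]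
  exact irreducible_simplestCubic_zmod_two _

lemma minpoly_of_isRoot_simplestCubic {K : Type*} [Field K] [CharZero K] {a : ℤ} {x : K}
    (hx : (simplestCubic (a : K)).IsRoot x) : minpoly ℚ x = simplestCubic (a : ℚ) := by
  have hmap : (simplestCubic a).map (algebraMap ℤ ℚ) = simplestCubic (a : ℚ) :=
    map_simplestCubic _ a
  refine (minpoly.eq_of_irreducible_of_monic ?_ ?_ (monic_simplestCubic _)).symm
  · rw [← hmap]
    exact (monic_simplestCubic a).irreducible_iff_irreducible_map_fraction_map.mp
      (irreducible_simplestCubic a)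
  · rwa [aeval_def, ← eval_map, map_simplestCubic, map_intCast]

lemma quadratic_ne_zero_of_isRoot_simplestCubic {K : Type*} [Field K] [CharZero K] {a : ℤ} {x : K}
    (hx : (simplestCubic (a : K)).IsRoot x) {b : ℤ} (hb : b ≠ 0) (c d : ℤ) :
    (b * x ^ 2 + c * x + d : K) ≠ 0 := by
  intro h
  have hb' : (b : ℚ) ≠ 0 := mod_cast hb
  let g : ℚ[X] := C (b : ℚ) * X ^ 2 + C (c : ℚ) * X + C (d : ℚ)
  have hg : g.natDegree = 2 := natDegree_quadratic hb'
  have hle := natDegree_le_of_dvd (minpoly.dvd ℚ x (p := g) (by simpa [g] using h))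
    (ne_zero_of_natDegree_gt (hg ▸ two_pos))
  rw [minpoly_of_isRoot_simplestCubic hx, natDegree_simplestCubic] at hle
  omega

-- The order-three map `x ↦ -1 / (1 + x)` permutes the roots.
lemma isRoot_simplestCubic_iff {K : Type*} [Field K] {a ρ : K}
    (hρ : (simplestCubic a).IsRoot ρ) {x : K} :
    (simplestCubic a).IsRoot x ↔ x = ρ ∨ x = -1 / (1 + ρ) ∨ x = -(1 + ρ) / ρ := by
  rw [isRoot_simplestCubic] at hρ ⊢
  have hρ0 : ρ ≠ 0 := by
    rintro rfl
    simp at hρ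
  have hρ1 : 1 + ρ ≠ 0 := by
    intro h
    obtain rfl : ρ = -1 := by linear_combination h
    exact one_ne_zero (α := K) (by linear_combination hρ)
  have hfactor : x ^ 3 - a * x ^ 2 - (a + 3) * x - 1 =
      (x - ρ) * ((x - -1 / (1 + ρ)) * (x - -(1 + ρ) / ρ)) := by
    field_simp
    linear_combination (x ^ 2 + x) * hρ
  rw [hfactor, mul_eq_zero, mul_eq_zero, sub_eq_zero, sub_eq_zero, sub_eq_zero]

lemma exists_root_gt {a : ℝ} (ha : 0 ≤ a) : ∃ ρ, a + 1 < ρ ∧ (simplestCubic a).IsRoot ρ := by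
  let f : ℝ → ℝ := fun x ↦ x ^ 3 - a * x ^ 2 - (a + 3) * x - 1
  have hf : ContinuousOn f (Set.Icc (a + 1) (a + 2)) := by fun_prop
  have hneg : f (a + 1) < 0 := by
    calc f (a + 1) = -2 * a - 3 := by ring
      _ < 0 := by linarith
  have hpos : 0 < f (a + 2) := by
    calc 0 < a ^ 2 + 3 * a + 1 := by positivity
      _ = f (a + 2) := by ring
  obtain ⟨ρ, ⟨hρ, -⟩, hroot⟩ := intermediate_value_Ioo (by linarith) hf ⟨hneg, hpos⟩
  exact ⟨ρ, hρ, isRoot_simplestCubic.mpr hroot⟩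

lemma roots_simplestCubic_eq {a ρ₁ ρ₂ ρ₃ : ℝ} (ha : 0 ≤ a) (h12 : ρ₁ < ρ₂) (h23 : ρ₂ < ρ₃)
    (h1 : (simplestCubic a).IsRoot ρ₁) (h2 : (simplestCubic a).IsRoot ρ₂)
    (h3 : (simplestCubic a).IsRoot ρ₃) :
    a + 1 < ρ₃ ∧ ρ₂ = -1 / (1 + ρ₃) ∧ ρ₁ = -(1 + ρ₃) / ρ₃ := by
  obtain ⟨ρ, hρ, hroot⟩ := exists_root_gt ha
  have hlow : -(1 + ρ) / ρ < -1 := by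
    rw [div_lt_iff₀ (by linarith)]
    linarith
  have hmid : -1 < -1 / (1 + ρ) := by
    rw [lt_div_iff₀ (by linarith)]
    linarith
  have hmid' : -1 / (1 + ρ) < 0 := div_neg_of_neg_of_pos (by norm_num) (by linarith)
  rw [isRoot_simplestCubic_iff hroot] at h1 h2 h3
  obtain rfl : ρ₃ = ρ := by
    rcases h1 with h1 | h1 | h1 <;> rcases h2 with h2 | h2 | h2 <;>
      rcases h3 with h3 | h3 | h3 <;> linarith
  refine ⟨hρ, ?_, ?_⟩ <;> rcases h1 with h1 | h1 | h1 <;> rcases h2 with h2 | h2 | h2 <;> linarith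

end SimplestCubic

section Interlacing

/-- The quadratic `b x² + c x + d` has two real roots, one in `[ρ₁, ρ₂]` and one in `[ρ₂, ρ₃]`. -/
def HasInterlacingRoots (b c d ρ₁ ρ₂ ρ₃ : ℝ) : Prop :=
  ∃ β₁ β₂ : ℝ, β₁ ≤ β₂ ∧ b * β₁ ^ 2 + c * β₁ + d = 0 ∧ b * β₂ ^ 2 + c * β₂ + d = 0 ∧
    ρ₁ ≤ β₁ ∧ β₁ ≤ ρ₂ ∧ ρ₂ ≤ β₂ ∧ β₂ ≤ ρ₃

lemma quadratic_eq_mul_of_roots {R : Type*} [CommRing R] [IsDomain R] {b c d β₁ β₂ : R}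
    (hβ : β₁ ≠ β₂) (h₁ : b * β₁ ^ 2 + c * β₁ + d = 0) (h₂ : b * β₂ ^ 2 + c * β₂ + d = 0) (x : R) :
    b * x ^ 2 + c * x + d = b * ((x - β₁) * (x - β₂)) := by
  have hsum : b * (β₁ + β₂) + c = 0 := by
    apply mul_left_cancel₀ (sub_ne_zero.mpr hβ)
    linear_combination h₁ - h₂
  linear_combination (x - β₁) * hsum + h₁

lemma hasInterlacingRoots_iff {b c d ρ₁ ρ₂ ρ₃ : ℝ} (hb : 0 ≤ b) (h12 : ρ₁ ≤ ρ₂) (h23 : ρ₂ ≤ ρ₃)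
    (hne : b * ρ₂ ^ 2 + c * ρ₂ + d ≠ 0) :
    HasInterlacingRoots b c d ρ₁ ρ₂ ρ₃ ↔ 0 ≤ b * ρ₁ ^ 2 + c * ρ₁ + d ∧
      b * ρ₂ ^ 2 + c * ρ₂ + d ≤ 0 ∧ 0 ≤ b * ρ₃ ^ 2 + c * ρ₃ + d := by
  constructor
  · rintro ⟨β₁, β₂, hβ, hβ₁, hβ₂, h₁, h₂, h₃, h₄⟩
    have hβne : β₁ ≠ β₂ := by
      rintro rfl
      exact hne (le_antisymm h₂ h₃ ▸ hβ₁)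
    simp only [quadratic_eq_mul_of_roots hβne hβ₁ hβ₂]
    refine ⟨mul_nonneg hb (mul_nonneg_of_nonpos_of_nonpos ?_ ?_),
      mul_nonpos_of_nonneg_of_nonpos hb (mul_nonpos_of_nonneg_of_nonpos ?_ ?_),
      mul_nonneg hb (mul_nonneg ?_ ?_)⟩ <;> linarith
  · rintro ⟨h₁, h₂, h₃⟩
    have hcont : Continuous fun x : ℝ ↦ b * x ^ 2 + c * x + d := by fun_prop
    obtain ⟨β₁, ⟨h₁₁, h₁₂⟩, hβ₁⟩ := intermediate_value_Icc' h12 hcont.continuousOn ⟨h₂, h₁⟩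
    obtain ⟨β₂, ⟨h₂₁, h₂₂⟩, hβ₂⟩ := intermediate_value_Icc h23 hcont.continuousOn ⟨h₂, h₃⟩
    exact ⟨β₁, β₂, h₁₂.trans h₂₁, hβ₁, hβ₂, h₁₁, h₁₂, h₂₁, h₂₂⟩

end Interlacing

section Counting

open Finset

lemma card_filter_orbit_add_three_mul {α : Type*} [DecidableEq α] (σ : Equiv.Perm α)
    (hσ : ∀ p, σ (σ (σ p)) = p) {T D : Finset α} (hT : ∀ p, σ p ∈ T ↔ p ∈ T) (hDT : D ⊆ T)
    (hD : ∀ p ∈ D, σ p ∉ D) :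
    #{p ∈ T | p ∉ D ∧ σ p ∉ D ∧ σ (σ p) ∉ D} + 3 * #D = #T := by
  have hcard : ∑ p ∈ T, (if p ∈ D then 1 else 0) = #D := by
    rw [← card_filter, filter_mem_eq_inter, inter_eq_right.mpr hDT]
  have hshift (f : α → ℕ) : ∑ p ∈ T, f (σ p) = ∑ p ∈ T, f p :=
    sum_equiv σ (fun p ↦ (hT p).symm) fun _ _ ↦ rfl
  have hpartition (p : α) : (if p ∉ D ∧ σ p ∉ D ∧ σ (σ p) ∉ D then 1 else 0) +
      ((if p ∈ D then 1 else 0) + (if σ p ∈ D then 1 else 0) +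
        if σ (σ p) ∈ D then 1 else 0) = 1 := by
    have h₀ := hD p
    have h₁ := hD (σ p)
    have h₂ := hD (σ (σ p))
    rw [hσ] at h₂
    split_ifs <;> tauto
  have hcard₁ := (hshift fun p ↦ if p ∈ D then 1 else 0).trans hcard
  have hcard₂ := (hshift fun p ↦ if σ p ∈ D then 1 else 0).trans hcard₁
  have htotal := sum_congr rfl fun p (_ : p ∈ T) ↦ hpartition p
  rw [sum_add_distrib, sum_add_distrib, sum_add_distrib, ← card_filter, hcard, hcard₁, hcard₂,
    ← card_eq_sum_ones] at htotal
  omega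

/-- The lattice points `(x, y)` with `0 ≤ x < n` and `0 ≤ y < h x`. -/
noncomputable def latticeUnderGraph (n : ℤ) (h : ℤ → ℤ) : Finset (ℤ × ℤ) :=
  ((Ico 0 n).sigma fun x ↦ Ico 0 (h x)).map (Equiv.sigmaEquivProd ℤ ℤ).toEmbedding

lemma mem_latticeUnderGraph {n : ℤ} {h : ℤ → ℤ} {p : ℤ × ℤ} :
    p ∈ latticeUnderGraph n h ↔ (0 ≤ p.1 ∧ p.1 < n) ∧ 0 ≤ p.2 ∧ p.2 < h p.1 := by
  simp [latticeUnderGraph, mem_map_equiv]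

lemma card_latticeUnderGraph {n : ℤ} {h : ℤ → ℤ} (hh : ∀ x, 0 ≤ x → x < n → 0 ≤ h x) :
    (#(latticeUnderGraph n h) : ℤ) = ∑ x ∈ Ico 0 n, h x := by
  rw [latticeUnderGraph, card_map, card_sigma, Nat.cast_sum]
  refine sum_congr rfl fun x hx ↦ ?_
  obtain ⟨hx₀, hxn⟩ := mem_Ico.mp hx
  rw [Int.card_Ico_of_le _ _ (hh x hx₀ hxn), sub_zero]

lemma two_mul_sum_Ico_zero {n : ℤ} (hn : 0 ≤ n) : 2 * ∑ x ∈ Ico 0 n, x = n * (n - 1) := by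
  induction n, hn using Int.leInduction with
  | base => simp
  | succ n hn ih =>
    rw [← insert_Ico_right_eq_Ico_add_one hn, sum_insert right_notMem_Ico, mul_add, ih]
    ring

/-- The lattice points of the triangle `0 ≤ x, 0 ≤ y, x + y ≤ s`. -/
noncomputable def latticeTriangle (s : ℤ) : Finset (ℤ × ℤ) :=
  latticeUnderGraph (s + 1) fun x ↦ s + 1 - x

lemma mem_latticeTriangle {s : ℤ} {p : ℤ × ℤ} :
    p ∈ latticeTriangle s ↔ 0 ≤ p.1 ∧ 0 ≤ p.2 ∧ p.1 + p.2 ≤ s := by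
  rw [latticeTriangle, mem_latticeUnderGraph]
  omega

lemma two_mul_card_latticeTriangle {s : ℤ} (hs : 0 ≤ s) :
    (2 * #(latticeTriangle s) : ℤ) = (s + 1) * (s + 2) := by
  rw [latticeTriangle, card_latticeUnderGraph (by omega), sum_sub_distrib, mul_sub,
    two_mul_sum_Ico_zero (by omega), sum_const, nsmul_eq_mul, Int.card_Ico_of_le _ _ (by omega)]
  ring

/-- The lattice points `(x, y)` with `x, y ≥ 0` at which `edgeForm` is negative, described without
reference to the root `ρ`. As `(1 + ρ)² = (a + 2)(1 + ρ) + 2 + 1 / ρ`, nonnegativity of `edgeForm`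
means `y ≥ k(a + 1) - (a + 2)x + ⌈(k - 2x - x / ρ) / (1 + ρ)⌉`; for `0 ≤ x < k` the ceiling is `1`
or `0` according to whether `2x < k`, and for `x ≥ k` the condition is automatic. -/
noncomputable def latticeCorner (a k : ℤ) : Finset (ℤ × ℤ) :=
  latticeUnderGraph k fun x ↦ k * (a + 1) - (a + 2) * x + if 2 * x < k then 1 else 0

variable {a k : ℤ}

lemma mem_latticeCorner {p : ℤ × ℤ} :
    p ∈ latticeCorner a k ↔ (0 ≤ p.1 ∧ p.1 < k) ∧
      0 ≤ p.2 ∧ p.2 < k * (a + 1) - (a + 2) * p.1 + if 2 * p.1 < k then 1 else 0 :=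
  mem_latticeUnderGraph

lemma snd_le_of_mem_latticeCorner (ha : 0 ≤ a) {p : ℤ × ℤ} (hp : p ∈ latticeCorner a k) :
    p.2 ≤ k * (a + 1) - 2 * p.1 := by
  obtain ⟨⟨hx₀, -⟩, -, hy⟩ := mem_latticeCorner.mp hp
  have hax : 0 ≤ a * p.1 := mul_nonneg ha hx₀
  split_ifs at hy <;> linarith

lemma latticeCorner_subset_latticeTriangle (ha : 0 ≤ a) (hk : 0 ≤ k) :
    latticeCorner a k ⊆ latticeTriangle (k * (a + 3)) := by
  intro p hp
  have hle := snd_le_of_mem_latticeCorner ha hp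
  obtain ⟨⟨hx₀, -⟩, hy₀, -⟩ := mem_latticeCorner.mp hp
  exact mem_latticeTriangle.mpr ⟨hx₀, hy₀, by linarith⟩

lemma two_mul_card_latticeCorner (hk : 0 ≤ k) (hka : k ≤ a + 1) :
    (2 * #(latticeCorner a k) : ℤ) = a * k ^ 2 + (a + 2) * k + 2 * ((k + 1) / 2) := by
  have hheight (x : ℤ) (hx₀ : 0 ≤ x) (hxk : x < k) :
      0 ≤ k * (a + 1) - (a + 2) * x + if 2 * x < k then 1 else 0 := by
    have hx : 0 ≤ (a + 2) * (k - 1 - x) := mul_nonneg (by omega) (by omega)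
    split_ifs <;> nlinarith
  have hhalf : ∑ x ∈ Ico 0 k, (if 2 * x < k then 1 else 0) = (k + 1) / 2 := by
    have hfilter : {x ∈ Ico 0 k | 2 * x < k} = Ico 0 ((k + 1) / 2) := by
      ext x
      simp only [mem_filter, mem_Ico]
      omega
    rw [sum_boole, hfilter, Int.card_Ico_of_le _ _ (by omega), sub_zero]
  rw [latticeCorner, card_latticeUnderGraph hheight, sum_add_distrib, sum_sub_distrib, hhalf,
    sum_const, nsmul_eq_mul, Int.card_Ico_of_le _ _ hk, ← mul_sum]
  linear_combination -(a + 2) * two_mul_sum_Ico_zero hk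

/-- The symmetry of the triangle `0 ≤ x, 0 ≤ y, x + y ≤ s` that rotates the barycentric
coordinates `(x, y, s - x - y)`. -/
def rotateTriangle (s : ℤ) : Equiv.Perm (ℤ × ℤ) where
  toFun p := (p.2, s - p.1 - p.2)
  invFun p := (s - p.1 - p.2, p.1)
  left_inv p := by ext <;> simp
  right_inv p := Prod.ext rfl (by ring)

lemma rotateTriangle_apply (s : ℤ) (p : ℤ × ℤ) : rotateTriangle s p = (p.2, s - p.1 - p.2) := rfl

lemma rotateTriangle_rotateTriangle (s : ℤ) (p : ℤ × ℤ) :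
    rotateTriangle s (rotateTriangle s p) = (s - p.1 - p.2, p.1) := by
  ext <;> simp [rotateTriangle_apply]

lemma rotateTriangle_iterate_three (s : ℤ) (p : ℤ × ℤ) :
    rotateTriangle s (rotateTriangle s (rotateTriangle s p)) = p := by
  rw [rotateTriangle_rotateTriangle, rotateTriangle_apply]
  exact Prod.ext (by ring) rfl

lemma rotateTriangle_mem_latticeTriangle {s : ℤ} {p : ℤ × ℤ} :
    rotateTriangle s p ∈ latticeTriangle s ↔ p ∈ latticeTriangle s := by
  simp only [mem_latticeTriangle, rotateTriangle_apply]
  omega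

lemma rotateTriangle_notMem_latticeCorner (ha : 0 ≤ a) {p : ℤ × ℤ}
    (hp : p ∈ latticeCorner a k) : rotateTriangle (k * (a + 3)) p ∉ latticeCorner a k := by
  intro hq
  have hle := snd_le_of_mem_latticeCorner ha hq
  obtain ⟨⟨-, hx⟩, hy₀, -⟩ := mem_latticeCorner.mp hp
  obtain ⟨⟨-, hy⟩, -⟩ := mem_latticeCorner.mp hq
  simp only [rotateTriangle_apply] at hle hy
  linarith

/-- The lattice points of `latticeTriangle (k * (a + 3))` left after cutting off its three
corners. -/
noncomputable def truncatedTriangle (a k : ℤ) : Finset (ℤ × ℤ) :=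
  {p ∈ latticeTriangle (k * (a + 3)) | p ∉ latticeCorner a k ∧
    rotateTriangle (k * (a + 3)) p ∉ latticeCorner a k ∧
    rotateTriangle (k * (a + 3)) (rotateTriangle (k * (a + 3)) p) ∉ latticeCorner a k}

lemma two_mul_card_truncatedTriangle (ha : 0 ≤ a) (hk : 0 ≤ k) (hka : k ≤ a + 1) :
    (2 * #(truncatedTriangle a k) : ℤ) =
      k ^ 2 * (a ^ 2 + 3 * a + 9) + if Even k then 2 else -1 := by
  have horbit : (#(truncatedTriangle a k) : ℤ) + 3 * #(latticeCorner a k) =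
      #(latticeTriangle (k * (a + 3))) := mod_cast
    card_filter_orbit_add_three_mul _ (rotateTriangle_iterate_three _)
      (fun _ ↦ rotateTriangle_mem_latticeTriangle) (latticeCorner_subset_latticeTriangle ha hk)
      (fun _ ↦ rotateTriangle_notMem_latticeCorner ha)
  have hparity : 3 * k + 2 - 6 * ((k + 1) / 2) = if Even k then 2 else -1 := by
    split_ifs with heven
    · obtain ⟨t, rfl⟩ := heven
      omega
    · obtain ⟨t, rfl⟩ := Int.not_even_iff_odd.mp heven
      omega
  rw [← hparity]
  linear_combination 2 * horbit - 3 * two_mul_card_latticeCorner hk hka +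
    two_mul_card_latticeTriangle (by positivity : 0 ≤ k * (a + 3))

end Counting

section EdgeConditions

/-- The affine form attached to an edge of the dilated triangle `k T_a`, in the coordinates of
`triangleCoords`. For `ρ` the largest root of `f_a`, its values at the three rotations of `p` are
positive multiples of the values of the quadratic at the smallest root, of minus its value at the
middle root, and of its value at the largest root. -/
def edgeForm (a k : ℤ) (ρ : ℝ) (p : ℤ × ℤ) : ℝ :=
  (1 + ρ) ^ 2 * p.1 + (1 + ρ) * (p.2 - k * (a + 1)) - k

/-- The lattice coordinates of the quadratic `k x² + n₁ x + n₂`, where `n = (n₁, n₂)`. They are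
chosen so that the root symmetry `x ↦ -1 / (1 + x)` becomes `rotateTriangle (k * (a + 3))`. -/
def triangleCoords (k : ℤ) : ℤ × ℤ ≃ ℤ × ℤ where
  toFun n := (2 * k + n.2 - n.1, -n.2)
  invFun p := (2 * k - p.1 - p.2, -p.2)
  left_inv n := by ext <;> dsimp <;> ring
  right_inv p := by ext <;> dsimp <;> ring

lemma triangleCoords_apply (k : ℤ) (n : ℤ × ℤ) :
    triangleCoords k n = (2 * k + n.2 - n.1, -n.2) := rfl

variable {a k : ℤ} {ρ : ℝ}

lemma edgeForm_triangleCoords (hroot : (simplestCubic (a : ℝ)).IsRoot ρ) (hρ : ρ ≠ 0)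
    (n : ℤ × ℤ) :
    edgeForm a k ρ (triangleCoords k n) =
      ρ * (1 + ρ) * (k * (-(1 + ρ) / ρ) ^ 2 + n.1 * (-(1 + ρ) / ρ) + n.2) := by
  rw [isRoot_simplestCubic] at hroot
  simp only [edgeForm, triangleCoords_apply]
  push_cast
  field_simp
  linear_combination k * hroot

lemma edgeForm_rotateTriangle_triangleCoords (hρ : 1 + ρ ≠ 0) (n : ℤ × ℤ) :
    edgeForm a k ρ (rotateTriangle (k * (a + 3)) (triangleCoords k n)) =
      (1 + ρ) ^ 2 * -(k * (-1 / (1 + ρ)) ^ 2 + n.1 * (-1 / (1 + ρ)) + n.2) := by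
  simp only [edgeForm, triangleCoords_apply, rotateTriangle_apply]
  push_cast
  field_simp
  ring

lemma edgeForm_rotateTriangle_rotateTriangle_triangleCoords
    (hroot : (simplestCubic (a : ℝ)).IsRoot ρ) (n : ℤ × ℤ) :
    edgeForm a k ρ (rotateTriangle (k * (a + 3))
      (rotateTriangle (k * (a + 3)) (triangleCoords k n))) =
      (1 + ρ) * (k * ρ ^ 2 + n.1 * ρ + n.2) := by
  rw [isRoot_simplestCubic] at hroot
  simp only [edgeForm, triangleCoords_apply, rotateTriangle_rotateTriangle]
  push_cast
  linear_combination -k * hroot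

lemma hasInterlacingRoots_iff_edgeForm_rotations_nonneg {ρ₁ ρ₂ ρ₃ : ℝ} (ha : 0 ≤ a) (hk : 0 < k)
    (h12 : ρ₁ < ρ₂) (h23 : ρ₂ < ρ₃) (h1 : (simplestCubic (a : ℝ)).IsRoot ρ₁)
    (h2 : (simplestCubic (a : ℝ)).IsRoot ρ₂) (h3 : (simplestCubic (a : ℝ)).IsRoot ρ₃)
    (n : ℤ × ℤ) :
    HasInterlacingRoots k n.1 n.2 ρ₁ ρ₂ ρ₃ ↔
      0 ≤ edgeForm a k ρ₃ (triangleCoords k n) ∧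
      0 ≤ edgeForm a k ρ₃ (rotateTriangle (k * (a + 3)) (triangleCoords k n)) ∧
      0 ≤ edgeForm a k ρ₃ (rotateTriangle (k * (a + 3))
        (rotateTriangle (k * (a + 3)) (triangleCoords k n))) := by
  have ha' : (0 : ℝ) ≤ a := mod_cast ha
  have hk' : (0 : ℝ) ≤ k := mod_cast hk.le
  rw [hasInterlacingRoots_iff hk' h12.le h23.le
    (quadratic_ne_zero_of_isRoot_simplestCubic h2 hk.ne' n.1 n.2)]
  obtain ⟨hρ, hρ₂, hρ₁⟩ := roots_simplestCubic_eq ha' h12 h23 h1 h2 h3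
  have hρ₀ : 0 < ρ₃ := by linarith
  have hpos : 0 < 1 + ρ₃ := by linarith
  rw [edgeForm_triangleCoords h3 hρ₀.ne', edgeForm_rotateTriangle_triangleCoords hpos.ne',
    edgeForm_rotateTriangle_rotateTriangle_triangleCoords h3, ← hρ₁, ← hρ₂,
    mul_nonneg_iff_of_pos_left (mul_pos hρ₀ hpos), mul_nonneg_iff_of_pos_left (pow_pos hpos 2),
    mul_nonneg_iff_of_pos_left hpos, neg_nonneg]

lemma mul_intCast_sub_nonneg_iff {K : Type*} [Field K] [LinearOrder K] [IsStrictOrderedRing K]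
    [FloorRing K] {c s : K} {m e : ℤ} (hc : 0 < c) (hlt : c * (m - 1) < s) (hle : s ≤ c * m) :
    0 ≤ c * e - s ↔ m ≤ e := by
  have hceil : ⌈s / c⌉ = m := by
    rw [Int.ceil_eq_iff, lt_div_iff₀' hc, div_le_iff₀' hc]
    exact ⟨hlt, hle⟩
  rw [← hceil, Int.ceil_le, div_le_iff₀' hc, sub_nonneg]

lemma edgeForm_eq_of_isRoot (hroot : (simplestCubic (a : ℝ)).IsRoot ρ) (hρ : ρ ≠ 0) (p : ℤ × ℤ) :
    edgeForm a k ρ p = (1 + ρ) * (p.2 - (k * (a + 1) - (a + 2) * p.1) : ℤ) -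
      (k - 2 * p.1 - p.1 / ρ) := by
  rw [isRoot_simplestCubic] at hroot
  simp only [edgeForm]
  push_cast
  field_simp
  linear_combination p.1 * hroot

lemma edgeForm_nonneg_iff_notMem_latticeCorner (hk : 0 < k) (hka : k ≤ a + 1) (hρ : a + 1 < ρ)
    (hroot : (simplestCubic (a : ℝ)).IsRoot ρ) {p : ℤ × ℤ} (hx : 0 ≤ p.1) (hy : 0 ≤ p.2) :
    0 ≤ edgeForm a k ρ p ↔ p ∉ latticeCorner a k := by
  have hk' : (0 : ℝ) < k := mod_cast hk
  have hka' : (k : ℝ) ≤ a + 1 := mod_cast hka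
  have hx' : (0 : ℝ) ≤ p.1 := mod_cast hx
  have hρ₀ : 0 < ρ := by linarith
  have hquot₀ : 0 ≤ p.1 / ρ := by positivity
  rw [edgeForm_eq_of_isRoot hroot hρ₀.ne', mem_latticeCorner]
  rcases le_or_gt k p.1 with hkx | hxk
  · have hkx' : (k : ℝ) ≤ p.1 := mod_cast hkx
    have he : 0 ≤ p.2 - (k * (a + 1) - (a + 2) * p.1) := by nlinarith
    have hmul : 0 ≤ (1 + ρ) * (p.2 - (k * (a + 1) - (a + 2) * p.1) : ℤ) :=
      mul_nonneg (by linarith) (mod_cast he)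
    exact iff_of_true (by linarith) fun h ↦ h.1.2.not_ge hkx
  · have hxk' : (p.1 : ℝ) + 1 ≤ k := mod_cast hxk
    have hquot₁ : p.1 / ρ < 1 := (div_lt_one hρ₀).mpr (by linarith)
    rw [mul_intCast_sub_nonneg_iff (m := if 2 * p.1 < k then 1 else 0) (by linarith)]
    · simp only [hx, hxk, hy, and_self, true_and, not_lt]
      omega
    · split_ifs with h
      · have h' : 2 * (p.1 : ℝ) + 1 ≤ k := mod_cast h
        push_cast
        linarith
      · push_cast
        linarith
    · split_ifs with h
      · push_cast
        linarith
      · have h' : (k : ℝ) ≤ 2 * p.1 := mod_cast not_lt.mp h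
        push_cast
        linarith

-- The factor `1 + ρ` is chosen so that `p.1` cancels.
lemma one_add_mul_edgeForm_rotateTriangle_add (p : ℤ × ℤ) :
    (1 + ρ) * edgeForm a k ρ (rotateTriangle (k * (a + 3)) p) + edgeForm a k ρ p + k =
      (1 + ρ) * (p.2 * (ρ ^ 2 + ρ + 1) + k * (2 * ρ - a)) := by
  simp only [edgeForm, rotateTriangle_apply]
  push_cast
  ring

lemma snd_nonneg_of_edgeForm_nonneg (hk : 0 < k) (hka : k ≤ a + 1) (hρ : a + 1 < ρ) {p : ℤ × ℤ}
    (h₀ : 0 ≤ edgeForm a k ρ p) (h₁ : 0 ≤ edgeForm a k ρ (rotateTriangle (k * (a + 3)) p)) :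
    0 ≤ p.2 := by
  have hk' : (0 : ℝ) < k := mod_cast hk
  have hka' : (k : ℝ) ≤ a + 1 := mod_cast hka
  have hpos : 0 < p.2 * (ρ ^ 2 + ρ + 1) + k * (2 * ρ - a) := by
    refine pos_of_mul_pos_right (a := 1 + ρ) ?_ (by linarith)
    rw [← one_add_mul_edgeForm_rotateTriangle_add]
    have hmul := mul_nonneg (by linarith : 0 ≤ 1 + ρ) h₁
    linarith
  by_contra! hneg
  have hy : (p.2 : ℝ) ≤ -1 := mod_cast Int.le_sub_one_of_lt hneg
  have hgap : 0 < (ρ - a) * (ρ - (a + 1)) := mul_pos (by linarith) (by linarith)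
  have hle : p.2 * (ρ ^ 2 + ρ + 1) + k * (2 * ρ - a) ≤ 0 := by
    calc p.2 * (ρ ^ 2 + ρ + 1) + k * (2 * ρ - a)
        ≤ -1 * (ρ ^ 2 + ρ + 1) + (a + 1) * (2 * ρ - a) := by
          gcongr
          · nlinarith
          · linarith
      _ = -((ρ - a) * (ρ - (a + 1))) - 1 := by ring
      _ ≤ 0 := by linarith
  linarith

lemma mem_latticeTriangle_of_edgeForm_nonneg (hk : 0 < k) (hka : k ≤ a + 1) (hρ : a + 1 < ρ)
    {p : ℤ × ℤ} (h₀ : 0 ≤ edgeForm a k ρ p)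
    (h₁ : 0 ≤ edgeForm a k ρ (rotateTriangle (k * (a + 3)) p))
    (h₂ : 0 ≤ edgeForm a k ρ (rotateTriangle (k * (a + 3)) (rotateTriangle (k * (a + 3)) p))) :
    p ∈ latticeTriangle (k * (a + 3)) := by
  have hy := snd_nonneg_of_edgeForm_nonneg hk hka hρ h₀ h₁
  have hz := snd_nonneg_of_edgeForm_nonneg hk hka hρ h₁ h₂
  have hx := snd_nonneg_of_edgeForm_nonneg hk hka hρ h₂ (by rwa [rotateTriangle_iterate_three])
  rw [rotateTriangle_rotateTriangle] at hx
  rw [rotateTriangle_apply] at hz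
  exact mem_latticeTriangle.mpr ⟨hx, hy, by linarith⟩

lemma edgeForm_rotations_nonneg_iff_mem_truncatedTriangle (hk : 0 < k) (hka : k ≤ a + 1)
    (hρ : a + 1 < ρ) (hroot : (simplestCubic (a : ℝ)).IsRoot ρ) (p : ℤ × ℤ) :
    (0 ≤ edgeForm a k ρ p ∧ 0 ≤ edgeForm a k ρ (rotateTriangle (k * (a + 3)) p) ∧
      0 ≤ edgeForm a k ρ (rotateTriangle (k * (a + 3)) (rotateTriangle (k * (a + 3)) p))) ↔
      p ∈ truncatedTriangle a k := by
  have hcorner {q : ℤ × ℤ} (hq : q ∈ latticeTriangle (k * (a + 3))) :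
      0 ≤ edgeForm a k ρ q ↔ q ∉ latticeCorner a k := by
    obtain ⟨hx, hy, -⟩ := mem_latticeTriangle.mp hq
    exact edgeForm_nonneg_iff_notMem_latticeCorner hk hka hρ hroot hx hy
  have hedges (hp : p ∈ latticeTriangle (k * (a + 3))) :=
    have hp₁ := rotateTriangle_mem_latticeTriangle.mpr hp
    and_congr (hcorner hp) <| and_congr (hcorner hp₁) <|
      hcorner (rotateTriangle_mem_latticeTriangle.mpr hp₁)
  rw [truncatedTriangle, Finset.mem_filter]
  refine ⟨fun h ↦ ?_, fun ⟨hp, h⟩ ↦ (hedges hp).mpr h⟩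
  have hp := mem_latticeTriangle_of_edgeForm_nonneg hk hka hρ h.1 h.2.1 h.2.2
  exact ⟨hp, (hedges hp).mp h⟩

end EdgeConditions

theorem simplest_cubic_interlacing_count_general (a k : ℤ)
    (hk : 1 ≤ k) (hka : k ≤ a + 1) (ρ₁ ρ₂ ρ₃ : ℝ)
    (h12 : ρ₁ < ρ₂) (h23 : ρ₂ < ρ₃)
    (h1 : ρ₁ ^ 3 - a * ρ₁ ^ 2 - (a + 3) * ρ₁ - 1 = 0)
    (h2 : ρ₂ ^ 3 - a * ρ₂ ^ 2 - (a + 3) * ρ₂ - 1 = 0)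
    (h3 : ρ₃ ^ 3 - a * ρ₃ ^ 2 - (a + 3) * ρ₃ - 1 = 0) :
    (Set.ncard {p : ℤ × ℤ | ∃ β₁ β₂ : ℝ, β₁ ≤ β₂ ∧
        (k : ℝ) * β₁ ^ 2 + p.1 * β₁ + p.2 = 0 ∧ (k : ℝ) * β₂ ^ 2 + p.1 * β₂ + p.2 = 0 ∧
        ρ₁ ≤ β₁ ∧ β₁ ≤ ρ₂ ∧ ρ₂ ≤ β₂ ∧ β₂ ≤ ρ₃} : ℝ) =
      k ^ 2 * (a ^ 2 + 3 * a + 9) / 2 + (if Even k then 1 else -1 / 2) := by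
  rw [← isRoot_simplestCubic] at h1 h2 h3
  have ha : 0 ≤ a := by omega
  have hρ := (roots_simplestCubic_eq (mod_cast ha) h12 h23 h1 h2 h3).1
  have hset : {n : ℤ × ℤ | HasInterlacingRoots k n.1 n.2 ρ₁ ρ₂ ρ₃} =
      triangleCoords k ⁻¹' truncatedTriangle a k := by
    ext n
    rw [Set.mem_ofPred_eq, hasInterlacingRoots_iff_edgeForm_rotations_nonneg ha hk h12 h23 h1 h2 h3,
      edgeForm_rotations_nonneg_iff_mem_truncatedTriangle hk hka hρ h3]
    rfl
  have hncard : {n : ℤ × ℤ | HasInterlacingRoots k n.1 n.2 ρ₁ ρ₂ ρ₃}.ncard =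
      (truncatedTriangle a k).card := by
    rw [hset, Set.ncard_preimage_of_injective_subset_range (triangleCoords k).injective (by simp),
      Set.ncard_coe_finset]
  have hcount : (2 * (truncatedTriangle a k).card : ℝ) =
      k ^ 2 * (a ^ 2 + 3 * a + 9) + if Even k then 2 else -1 :=
    mod_cast two_mul_card_truncatedTriangle ha (by omega) hka
  refine (congrArg Nat.cast hncard).trans ?_
  split_ifs at hcount ⊢ <;> linarith

theorem simplest_cubic_interlacing_count (a k : ℤ) (ha : 1 ≤ a)
    (hk1 : 1 ≤ k) (hka : k ≤ a) (ρ₁ ρ₂ ρ₃ : ℝ)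
    (h12 : ρ₁ < ρ₂) (h23 : ρ₂ < ρ₃)
    (h1 : ρ₁^3 - a*ρ₁^2 - (a+3)*ρ₁ - 1 = 0)
    (h2 : ρ₂^3 - a*ρ₂^2 - (a+3)*ρ₂ - 1 = 0)
    (h3 : ρ₃^3 - a*ρ₃^2 - (a+3)*ρ₃ - 1 = 0) :
    (Set.ncard {p : ℤ × ℤ | ∃ β₁ β₂ : ℝ, β₁ ≤ β₂ ∧
        (k : ℝ)*β₁^2 + p.1*β₁ + p.2 = 0 ∧ (k : ℝ)*β₂^2 + p.1*β₂ + p.2 = 0 ∧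
        ρ₁ ≤ β₁ ∧ β₁ ≤ ρ₂ ∧ ρ₂ ≤ β₂ ∧ β₂ ≤ ρ₃} : ℝ) =
      k^2 * (a^2 + 3*a + 9) / 2 + (if Even k then 1 else -1/2) :=
  simplest_cubic_interlacing_count_general a k hk1 (by omega) ρ₁ ρ₂ ρ₃ h12 h23 h1 h2 h3
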